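/- If T(x) ⊆ S, then V(x) ⊆ πS; that is, every weak* limit point of the sequence of empirical measures (e_n(x))_{n≥1} is a convex combination Σ_{j=1}^d p_j·δ_{ξ_j} with p̄ ∈ S. -/

import Mathlib

open MeasureTheory Filter Topology Set
open scoped ENNReal

noncomputable section

variable {X : Type*} [MetricSpace X] [CompactSpace X] [MeasurableSpace X] [BorelSpace X]

/-- The `n`-th empirical measure `e_n(x) = (1/n) ∑_{k<n} δ_{f^k x}`. -/
def empMeasure (f : X → X) (n : ℕ) (x : X) : Measure X :=
  (n : ℝ≥0∞)⁻¹ • ∑ k ∈ Finset.range n, Measure.dirac (f^[k] x)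

/-- Weak* convergence of a sequence of measures, tested against bounded continuous functions. -/
def WeakTendsto (μ : ℕ → Measure X) (ν : Measure X) : Prop :=
  ∀ g : BoundedContinuousFunction X ℝ,
    Tendsto (fun n => ∫ y, g y ∂(μ n)) atTop (𝓝 (∫ y, g y ∂ν))

/-- `V(x)`: the set of weak* limit points of `(e_n(x))_{n ≥ 1}`. -/
def Vset (f : X → X) (x : X) : Set (Measure X) :=
  {ν | ∃ φ : ℕ → ℕ, StrictMono φ ∧ WeakTendsto (fun k => empMeasure f (φ k + 1) x) ν}

/-- The simplex `S = {p̄ ∈ [0,1]^d : p₁ + ⋯ + p_d = 1}`. -/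
def simplexS (d : ℕ) : Set (Fin d → ℝ) :=
  {p | (∀ i, p i ∈ Set.Icc (0:ℝ) 1) ∧ ∑ i, p i = 1}

/-- The measure `ν_p̄ = ∑_j p_j δ_{ξ_j}`. -/
def nuMeasure {d : ℕ} (ξ : Fin d → X) (p : Fin d → ℝ) : Measure X :=
  ∑ j, ENNReal.ofReal (p j) • Measure.dirac (ξ j)

/-- The first hit time `τ(x) = min {n ≥ 1 : f^n(x) ∈ Y}` (junk value `0` if the orbit
never hits `Y`). -/
def hitTime (f : X → X) (Y : Set X) (x : X) : ℕ :=
  sInf {n | 1 ≤ n ∧ f^[n] x ∈ Y}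

/-- The first return map `F = f^τ`. -/
def retMap (f : X → X) (Y : Set X) (x : X) : X :=
  f^[hitTime f Y x] x

/-- The Birkhoff sums `τ_k(x) = ∑_{j<k} τ(F^j x)` of the return time under `F`. -/
def tauSum (f : X → X) (Y : Set X) (k : ℕ) (x : X) : ℕ :=
  ∑ j ∈ Finset.range k, hitTime f Y ((retMap f Y)^[j] x)

/-- `τ^{(i)}(y) = #{1 ≤ n ≤ τ(y) : f^n(y) ∈ A}` (with `A = X_i`). -/
def tauJ (f : X → X) (Y A : Set X) (y : X) : ℕ :=
  ∑ n ∈ Finset.Icc 1 (hitTime f Y y), A.indicator (fun _ => 1) (f^[n] y)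

/-- The Birkhoff sums `τ^{(i)}_k(x) = ∑_{j<k} τ^{(i)}(F^j x)`. -/
def tauJSum (f : X → X) (Y A : Set X) (k : ℕ) (x : X) : ℕ :=
  ∑ j ∈ Finset.range k, tauJ f Y A ((retMap f Y)^[j] x)

/-- The vector of ratios `τ̄_k(x)/τ_k(x) ∈ [0,1]^d`. -/
def tauRatio (f : X → X) (Y : Set X) {d : ℕ} (Xp : Fin d → Set X) (k : ℕ) (x : X) :
    Fin d → ℝ :=
  fun i => (tauJSum f Y (Xp i) k x : ℝ) / (tauSum f Y k x : ℝ)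

/-- `T(x) ⊆ [0,1]^d`: the set of limit points of the sequence `(τ̄_k(x)/τ_k(x))_{k ≥ 1}`. -/
def Tset (f : X → X) (Y : Set X) {d : ℕ} (Xp : Fin d → Set X) (x : X) :
    Set (Fin d → ℝ) :=
  {p | ∃ φ : ℕ → ℕ, StrictMono φ ∧
    Tendsto (fun k => tauRatio f Y Xp (φ k + 1) x) atTop (𝓝 p)}


/-- Number of visits to `A` at times `1..n`. -/
def visits (f : X → X) (A : Set X) (n : ℕ) (x : X) : ℕ :=
  ∑ m ∈ Finset.Icc 1 n, A.indicator (fun _ => 1) (f^[m] x)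

lemma visits_add (f : X → X) (A : Set X) (n m : ℕ) (x : X) :
    visits f A (n + m) x = visits f A n x + visits f A m (f^[n] x) := by
  unfold visits
  induction m with
  | zero => simp
  | succ m ih =>
    rw [← add_assoc, Finset.sum_Icc_succ_top (by omega), ih, Finset.sum_Icc_succ_top (by omega),
      ← add_assoc, ← Function.iterate_add_apply,
      show m + 1 + n = n + m + 1 by omega]

lemma retMap_iter (f : X → X) (Y : Set X) (k : ℕ) (x : X) :
    (retMap f Y)^[k] x = f^[tauSum f Y k x] x := by
  induction k with
  | zero => simp [tauSum]
  | succ k ih =>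
    have h : tauSum f Y (k+1) x = hitTime f Y ((retMap f Y)^[k] x) + tauSum f Y k x := by
      simp [tauSum, Finset.sum_range_succ, add_comm]
    rw [Function.iterate_succ_apply', h, Function.iterate_add_apply, ← ih]
    rfl

lemma tauJSum_eq (f : X → X) (Y A : Set X) (k : ℕ) (x : X) :
    tauJSum f Y A k x = visits f A (tauSum f Y k x) x := by
  induction k with
  | zero => simp [tauSum, tauJSum, visits]
  | succ k ih =>
    have h : tauSum f Y (k+1) x = tauSum f Y k x + hitTime f Y ((retMap f Y)^[k] x) := by
      simp [tauSum, Finset.sum_range_succ]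
    rw [h, visits_add, ← ih, ← retMap_iter]
    simp [tauJSum, Finset.sum_range_succ, tauJ, visits]

lemma hitTime_spec (f : X → X) (Y : Set X) (y : X) (h : ∃ n, 1 ≤ n ∧ f^[n] y ∈ Y) :
    1 ≤ hitTime f Y y ∧ f^[hitTime f Y y] y ∈ Y :=
  Nat.sInf_mem (s := {n | 1 ≤ n ∧ f^[n] y ∈ Y}) h

lemma tauJ_self (f : X → X) (Y : Set X) (y : X) (h : ∃ n, 1 ≤ n ∧ f^[n] y ∈ Y) :
    tauJ f Y Y y = 1 := by
  obtain ⟨h1, h2⟩ := hitTime_spec f Y y h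
  unfold tauJ
  rw [Finset.sum_eq_single (hitTime f Y y)]
  · simp [h2]
  · intro b hb hne
    rw [Finset.mem_Icc] at hb
    apply Set.indicator_of_notMem
    intro hY
    have : hitTime f Y y ≤ b := Nat.sInf_le ⟨hb.1, hY⟩
    omega
  · intro hb
    exact absurd (Finset.mem_Icc.2 ⟨h1, le_rfl⟩) hb

lemma visits_sum (f : X → X) (Y : Set X) {d : ℕ} (Xp : Fin d → Set X)
    (hXd : Pairwise (Function.onFun Disjoint Xp)) (hXU : (⋃ j, Xp j) = Yᶜ) (n : ℕ) (x : X) :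
    ∑ i, visits f (Xp i) n x + visits f Y n x = n := by
  unfold visits
  rw [Finset.sum_comm, ← Finset.sum_add_distrib]
  have : ∀ m ∈ Finset.Icc 1 n, (∑ i, (Xp i).indicator (fun _ => 1) (f^[m] x))
      + Y.indicator (fun _ => 1) (f^[m] x) = 1 := by
    intro m _
    by_cases hY : f^[m] x ∈ Y
    · have h0 : ∀ i, f^[m] x ∉ Xp i := by
        intro i hi
        have : f^[m] x ∈ Yᶜ := hXU ▸ Set.mem_iUnion.2 ⟨i, hi⟩
        exact this hY
      simp [hY, h0]
    · have : f^[m] x ∈ ⋃ j, Xp j := by rw [hXU]; exact hY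
      obtain ⟨i, hi⟩ := Set.mem_iUnion.1 this
      rw [Finset.sum_eq_single i]
      · simp [hi, hY]
      · intro j _ hj
        apply Set.indicator_of_notMem
        intro hj'
        exact Set.disjoint_left.1 (hXd hj) hj' hi
      · simp
  rw [Finset.sum_congr rfl this]
  simp

lemma exists_return (f : X → X) (Y : Set X) (x : X)
    (hxrec : ∀ N : ℕ, ∃ n, N ≤ n ∧ 1 ≤ n ∧ f^[n] x ∈ Y) (k : ℕ) :
    ∃ n, 1 ≤ n ∧ f^[n] ((retMap f Y)^[k] x) ∈ Y := by
  rw [retMap_iter]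
  obtain ⟨n, hn, -, hY⟩ := hxrec (tauSum f Y k x + 1)
  refine ⟨n - tauSum f Y k x, by omega, ?_⟩
  rw [← Function.iterate_add_apply]
  rwa [Nat.sub_add_cancel (by omega)]

lemma visits_tauSum (f : X → X) (Y : Set X) (x : X)
    (hxrec : ∀ N : ℕ, ∃ n, N ≤ n ∧ 1 ≤ n ∧ f^[n] x ∈ Y) (k : ℕ) :
    visits f Y (tauSum f Y k x) x = k := by
  rw [← tauJSum_eq, tauJSum,
    Finset.sum_congr rfl (fun j _ => tauJ_self f Y _ (exists_return f Y x hxrec j))]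
  simp

lemma tauSum_ge (f : X → X) (Y : Set X) (x : X)
    (hxrec : ∀ N : ℕ, ∃ n, N ≤ n ∧ 1 ≤ n ∧ f^[n] x ∈ Y) (k : ℕ) :
    k ≤ tauSum f Y k x := by
  have : ∑ j ∈ Finset.range k, 1 ≤ tauSum f Y k x :=
    Finset.sum_le_sum (fun j _ => (hitTime_spec f Y _ (exists_return f Y x hxrec j)).1)
  simpa using this

lemma small_ratio (f : X → X) (Y : Set X) {d : ℕ} (Xp : Fin d → Set X)
    (hXd : Pairwise (Function.onFun Disjoint Xp)) (hXU : (⋃ j, Xp j) = Yᶜ) (x : X)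
    (hxrec : ∀ N : ℕ, ∃ n, N ≤ n ∧ 1 ≤ n ∧ f^[n] x ∈ Y)
    (hT : Tset f Y Xp x ⊆ simplexS d) (ε : ℝ) (hε : 0 < ε) :
    ∃ K : ℕ, ∀ k, K ≤ k → (k : ℝ) ≤ ε * tauSum f Y k x := by
  by_contra! hcon
  have key : ∀ k, (∑ i, (tauJSum f Y (Xp i) k x : ℝ)) + k = tauSum f Y k x := by
    intro k
    have := visits_sum f Y Xp hXd hXU (tauSum f Y k x) x
    rw [visits_tauSum f Y x hxrec] at this
    simp_rw [← tauJSum_eq] at this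
    exact_mod_cast this
  have hfreq : ∃ᶠ k in atTop, ε * tauSum f Y (k+1) x < ((k+1 : ℕ) : ℝ) := by
    rw [frequently_atTop]
    intro a
    obtain ⟨k, hk, h⟩ := hcon (a+1)
    refine ⟨k-1, by omega, ?_⟩
    rwa [Nat.sub_add_cancel (by omega)]
  obtain ⟨φ, hφ, hφ'⟩ := extraction_of_frequently_atTop hfreq
  have hcpt : IsCompact (Set.Icc (0 : Fin d → ℝ) 1) := isCompact_Icc
  have hmem : ∀ k, tauRatio f Y Xp (φ k + 1) x ∈ Set.Icc (0 : Fin d → ℝ) 1 := by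
    intro k
    refine ⟨fun i => ?_, fun i => ?_⟩
    · simp only [tauRatio, Pi.zero_apply]; positivity
    · simp only [tauRatio, Pi.one_apply]
      apply div_le_one_of_le₀ _ (by positivity)
      rw [← key]
      have := Finset.single_le_sum (f := fun i => (tauJSum f Y (Xp i) (φ k + 1) x : ℝ))
        (fun i _ => by positivity) (Finset.mem_univ i)
      have h2 : (0:ℝ) ≤ ((φ k + 1 : ℕ) : ℝ) := by positivity
      linarith
  obtain ⟨p, -, ψ, hψ, hlim⟩ := hcpt.tendsto_subseq hmem
  have hpS := (hT ⟨φ ∘ ψ, hφ.comp hψ, hlim⟩ : p ∈ simplexS d).2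
  have hsum : Tendsto (fun k => ∑ i, tauRatio f Y Xp (φ (ψ k) + 1) x i) atTop (𝓝 (∑ i, p i)) :=
    tendsto_finsetSum _ (fun i _ => (tendsto_pi_nhds.1 hlim) i)
  have hle : ∀ k, ∑ i, tauRatio f Y Xp (φ (ψ k) + 1) x i ≤ 1 - ε := by
    intro k
    have h1 := key (φ (ψ k) + 1)
    have h2 := hφ' (ψ k)
    have h3 : (0:ℝ) < tauSum f Y (φ (ψ k) + 1) x := by
      have := tauSum_ge f Y x hxrec (φ (ψ k) + 1)
      exact_mod_cast (by omega : 0 < tauSum f Y (φ (ψ k) + 1) x)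
    simp only [tauRatio]
    rw [← Finset.sum_div, div_le_iff₀ h3]
    linarith
  have := le_of_tendsto' hsum hle
  linarith

lemma visits_mono (f : X → X) (A : Set X) (x : X) {n m : ℕ} (h : n ≤ m) :
    visits f A n x ≤ visits f A m x := by
  obtain ⟨l, rfl⟩ := Nat.exists_eq_add_of_le h
  rw [visits_add]; omega

lemma visits_small (f : X → X) (Y : Set X) {d : ℕ} (Xp : Fin d → Set X)
    (hXd : Pairwise (Function.onFun Disjoint Xp)) (hXU : (⋃ j, Xp j) = Yᶜ) (x : X)
    (hxrec : ∀ N : ℕ, ∃ n, N ≤ n ∧ 1 ≤ n ∧ f^[n] x ∈ Y)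
    (hT : Tset f Y Xp x ⊆ simplexS d) (ε : ℝ) (hε : 0 < ε) :
    ∃ C : ℝ, 0 ≤ C ∧ ∀ n : ℕ, (visits f Y n x : ℝ) ≤ ε * n + C := by
  obtain ⟨K, hK⟩ := small_ratio f Y Xp hXd hXU x hxrec hT ε hε
  refine ⟨K + 1, by positivity, fun n => ?_⟩
  have hex : ∃ k, n < tauSum f Y k x :=
    ⟨n + 1, tauSum_ge f Y x hxrec (n+1)⟩
  classical
  obtain ⟨k, hk⟩ : ∃ k, Nat.find hex = k + 1 := by
    apply Nat.exists_eq_succ_of_ne_zero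
    intro h0
    have := Nat.find_spec hex
    rw [h0] at this
    simp [tauSum] at this
  have h1 := Nat.find_spec hex
  rw [hk] at h1
  have h2 : tauSum f Y k x ≤ n := not_lt.1 (Nat.find_min hex (by omega))
  have h3 : visits f Y n x ≤ k + 1 := by
    have := visits_mono f Y x h1.le
    rwa [visits_tauSum f Y x hxrec] at this
  have h3' : (visits f Y n x : ℝ) ≤ k + 1 := by exact_mod_cast h3
  have h2' : (tauSum f Y k x : ℝ) ≤ n := by exact_mod_cast h2
  have h4 : ε * (tauSum f Y k x : ℝ) ≤ ε * n := by gcongr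
  have h5 : (0:ℝ) ≤ ε * n := by positivity
  rcases le_total K k with h | h
  · have := hK k h
    have : (0:ℝ) ≤ K := by positivity
    linarith
  · have : (k:ℝ) ≤ K := by exact_mod_cast h
    linarith

open Classical in
lemma visits_card (f : X → X) (A : Set X) (n : ℕ) (x : X) :
    visits f A n x = ((Finset.Icc 1 n).filter (fun m => f^[m] x ∈ A)).card := by
  rw [Finset.card_filter]
  rfl

open Classical in
lemma count_K (f : X → X) (Y K : Set X) (B : ℕ)
    (hB : ∀ z ∈ K \ Y, ∃ n, 1 ≤ n ∧ n ≤ B ∧ f^[n] z ∈ Y) (x : X) (n : ℕ) :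
    ((Finset.range n).filter (fun m => f^[m] x ∈ K)).card
      ≤ (visits f Y (n + B) x + 1) + visits f Y (n + B) x * B := by
  have hsub : (Finset.range n).filter (fun m => f^[m] x ∈ K) ⊆
      (insert 0 ((Finset.Icc 1 (n + B)).filter (fun m => f^[m] x ∈ Y))) ∪
      ((Finset.Icc 1 (n + B)).filter (fun m => f^[m] x ∈ Y)).biUnion
        (fun m => (Finset.Icc 1 B).image (fun r => m - r)) := by
    intro k hk
    rw [Finset.mem_filter, Finset.mem_range] at hk
    obtain ⟨hk, hkK⟩ := hk
    rw [Finset.mem_union]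
    by_cases hY : f^[k] x ∈ Y
    · left
      rw [Finset.mem_insert, Finset.mem_filter, Finset.mem_Icc]
      by_cases h0 : k = 0
      · exact Or.inl h0
      · exact Or.inr ⟨by omega, hY⟩
    · right
      obtain ⟨r, h1, h2, h3⟩ := hB _ ⟨hkK, hY⟩
      rw [← Function.iterate_add_apply] at h3
      rw [Finset.mem_biUnion]
      refine ⟨r + k, ?_, ?_⟩
      · rw [Finset.mem_filter, Finset.mem_Icc]
        exact ⟨by omega, h3⟩
      · rw [Finset.mem_image]
        exact ⟨r, Finset.mem_Icc.2 ⟨h1, h2⟩, by omega⟩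
  refine (Finset.card_le_card hsub).trans ((Finset.card_union_le _ _).trans ?_)
  rw [visits_card]
  refine add_le_add (Finset.card_insert_le _ _) ?_
  refine Finset.card_biUnion_le_card_mul _ _ _ (fun m _ => ?_)
  exact Finset.card_image_le.trans (by simp)

lemma integral_emp (f : X → X) (n : ℕ) (x : X) (g : BoundedContinuousFunction X ℝ) :
    ∫ y, g y ∂(empMeasure f n x) = (n : ℝ)⁻¹ * ∑ k ∈ Finset.range n, g (f^[k] x) := by
  unfold empMeasure
  rw [integral_smul_measure, integral_finsetSum_measure]
  · simp
  · intro i _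
    exact g.integrable _

lemma finish (ν : Measure X) [IsProbabilityMeasure ν] {d : ℕ} (ξ : Fin d → X)
    (hξ : Function.Injective ξ) (h : ν (Set.range ξ)ᶜ = 0) :
    ∃ p ∈ simplexS d, ν = nuMeasure ξ p := by
  have hν : ν = nuMeasure ξ (fun j => ν.real {ξ j}) := by
    ext A hA
    have hA1 : ν A = ν (A ∩ Set.range ξ) := by
      have hc : ∀ᵐ y ∂ν, y ∈ Set.range ξ := h
      refine measure_congr ?_
      filter_upwards [hc] with y hy
      exact propext ⟨fun h1 => ⟨h1, hy⟩, fun h1 => h1.1⟩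
    have hA2 : A ∩ Set.range ξ = ⋃ j, (A ∩ {ξ j}) := by
      rw [← Set.inter_iUnion, Set.iUnion_singleton_eq_range]
    rw [hA1, hA2, measure_iUnion, tsum_fintype]
    · simp only [nuMeasure, Measure.coe_finsetSum, Finset.sum_apply, Measure.smul_apply,
        smul_eq_mul, ofReal_measureReal]
      refine Finset.sum_congr rfl (fun j _ => ?_)
      rw [Measure.dirac_apply' _ hA]
      by_cases hj : ξ j ∈ A
      · have : A ∩ {ξ j} = {ξ j} := by ext; simp; rintro rfl; exact hj
        simp [this, hj]
      · have : A ∩ {ξ j} = ∅ := by ext; simp; rintro h rfl; exact hj h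
        simp [this, hj]
    · intro i j hij
      refine Disjoint.mono Set.inter_subset_right Set.inter_subset_right ?_
      rw [Set.disjoint_singleton]
      exact fun e => hij (hξ e)
    · intro j
      exact hA.inter (measurableSet_singleton _)
  refine ⟨fun j => ν.real {ξ j}, ⟨fun i => ⟨measureReal_nonneg, measureReal_le_one⟩, ?_⟩, hν⟩
  have h1 : ν Set.univ = 1 := measure_univ
  rw [hν] at h1
  simp only [nuMeasure, Measure.coe_finsetSum, Finset.sum_apply, Measure.smul_apply,
        smul_eq_mul, measure_univ, mul_one] at h1
  rw [← ENNReal.ofReal_sum_of_nonneg (fun i _ => measureReal_nonneg)] at h1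
  simpa using h1

/-- If `T(x) ⊆ S`, then every weak* limit point of the empirical measures
is a convex combination `∑_j p_j δ_{ξ_j}` with `p̄ ∈ S`. -/
theorem stmt6 (f : X → X) (hf : Measurable f)
    (Y : Set X) (hYc : IsCompact Y)
    (d : ℕ) (hd : 1 ≤ d) (ξ : Fin d → X) (hξ : Function.Injective ξ)
    (hξY : ∀ j, ξ j ∉ Y)
    (Xp : Fin d → Set X) (hXm : ∀ j, MeasurableSet (Xp j))
    (hXd : Pairwise (Function.onFun Disjoint Xp))
    (hXU : (⋃ j, Xp j) = Yᶜ)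
    (hξint : ∀ j, ξ j ∈ interior (Xp j))
    (hξcl : ∀ i j, i ≠ j → ξ i ∉ closure (Xp j))
    (hnc : ∀ z : X, ∀ n m : ℕ, ∀ i j, i ≠ j →
      f^[n] z ∈ Xp i → f^[n + m] z ∈ Xp j → ∃ k, 0 < k ∧ k < m ∧ f^[n + k] z ∈ Y)
    (hbd : ∀ K : Set X, IsCompact K → (∀ j, ξ j ∉ K) →
      ∃ B : ℕ, ∀ z ∈ K \ Y, ∃ n, 1 ≤ n ∧ n ≤ B ∧ f^[n] z ∈ Y)
    (x : X) (hxY : x ∈ Y) (hxrec : ∀ N : ℕ, ∃ n, N ≤ n ∧ 1 ≤ n ∧ f^[n] x ∈ Y)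
    (hT : Tset f Y Xp x ⊆ simplexS d) :
    Vset f x ⊆ {ν | ∃ p ∈ simplexS d, ν = nuMeasure ξ p} := by
  classical
  rintro ν ⟨φ, hφ, hw⟩
  have hone : ν.real Set.univ = 1 := by
    have h1 := hw (BoundedContinuousFunction.const X (1:ℝ))
    simp_rw [integral_emp] at h1
    have h2 : Tendsto (fun k => (((φ k + 1 : ℕ) : ℝ))⁻¹ * ∑ i ∈ Finset.range (φ k + 1),
        (BoundedContinuousFunction.const X (1:ℝ)) (f^[i] x)) atTop (𝓝 1) := by
      refine tendsto_const_nhds.congr (fun k => ?_)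
      have : ((φ k + 1 : ℕ) : ℝ) ≠ 0 := by positivity
      simp only [BoundedContinuousFunction.const_apply, Finset.sum_const, Finset.card_range,
        nsmul_eq_mul, mul_one]
      rw [inv_mul_cancel₀ this]
    have := tendsto_nhds_unique h1 h2
    simpa using this
  have hprob : IsProbabilityMeasure ν := by
    refine ⟨?_⟩
    have := (ENNReal.toReal_eq_one_iff _).1 hone
    exact this
  refine finish ν ξ hξ ?_
  have hne : (Set.range ξ).Nonempty := ⟨ξ ⟨0, hd⟩, Set.mem_range_self _⟩
  have hcl : IsClosed (Set.range ξ) := (Set.finite_range ξ).isClosed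
  have hgc : Continuous (fun y => min 1 (Metric.infDist y (Set.range ξ))) :=
    continuous_const.min (Metric.continuous_infDist_pt _)
  let g : BoundedContinuousFunction X ℝ := BoundedContinuousFunction.mkOfCompact ⟨_, hgc⟩
  have hg : ∀ y, g y = min 1 (Metric.infDist y (Set.range ξ)) := fun y => rfl
  have hg0 : ∀ y, 0 ≤ g y := fun y => by
    rw [hg]; exact le_min zero_le_one Metric.infDist_nonneg
  have hg1 : ∀ y, g y ≤ 1 := fun y => by rw [hg]; exact min_le_left _ _
  have hgξ : ∀ j, g (ξ j) = 0 := fun j => by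
    rw [hg, Metric.infDist_zero_of_mem (Set.mem_range_self j)]; simp
  have hlim := hw g
  simp_rw [integral_emp] at hlim
  have hint : ∫ y, g y ∂ν = 0 := by
    refine le_antisymm ?_ (integral_nonneg hg0)
    refine le_of_forall_pos_le_add (fun ε hε => ?_)
    rw [zero_add]
    have hε2 : 0 < ε / 2 := by positivity
    have hKc : IsCompact {y | ε / 2 ≤ g y} :=
      (isClosed_le continuous_const g.continuous).isCompact
    obtain ⟨B, hB⟩ := hbd {y | ε / 2 ≤ g y} hKc (fun j hj => by
      simp only [Set.mem_ofPred_eq, hgξ] at hj; linarith)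
    obtain ⟨C, hC, hvis⟩ := visits_small f Y Xp hXd hXU x hxrec hT (ε / 2 / (1 + B))
      (by positivity)
    have hcount : ∀ n : ℕ, (((Finset.range n).filter
        (fun m => f^[m] x ∈ {y | ε / 2 ≤ g y})).card : ℝ)
          ≤ ε / 2 * n + (ε / 2 * B + C * (1 + B) + 1) := by
      intro n
      have h1 := count_K f Y _ B hB x n
      have h1' : (((Finset.range n).filter
        (fun m => f^[m] x ∈ {y | ε / 2 ≤ g y})).card : ℝ) ≤
          (visits f Y (n + B) x + 1) + visits f Y (n + B) x * B := by exact_mod_cast h1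
      have h2 := hvis (n + B)
      have h3 : (visits f Y (n + B) x : ℝ) * (1 + B) ≤
          (ε / 2 / (1 + B) * ((n + B : ℕ) : ℝ) + C) * (1 + B) := by gcongr
      have h4 : (ε / 2 / (1 + B) * ((n + B : ℕ) : ℝ) + C) * (1 + B)
          = ε / 2 * (n + B) + C * (1 + B) := by
        push_cast
        field_simp
      linarith
    set D := ε / 2 * B + C * (1 + B) + 1 with hD
    have hsum : ∀ n : ℕ, ∑ k ∈ Finset.range n, g (f^[k] x) ≤ ε * n + D := by
      intro n
      have : ∑ k ∈ Finset.range n, g (f^[k] x) ≤ ∑ k ∈ Finset.range n,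
          (ε / 2 + if f^[k] x ∈ {y | ε / 2 ≤ g y} then (1:ℝ) else 0) := by
        refine Finset.sum_le_sum (fun k _ => ?_)
        split_ifs with h
        · linarith [hg1 (f^[k] x)]
        · simp only [Set.mem_ofPred_eq, not_le] at h
          linarith
      rw [Finset.sum_add_distrib, Finset.sum_boole] at this
      simp only [Finset.sum_const, Finset.card_range, nsmul_eq_mul] at this
      linarith [hcount n]
    have hlim2 : Tendsto (fun k => ε + D * (((φ k + 1 : ℕ) : ℝ))⁻¹) atTop (𝓝 (ε + D * 0)) := by
      refine tendsto_const_nhds.add (tendsto_const_nhds.mul ?_)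
      refine tendsto_inv_atTop_zero.comp (tendsto_natCast_atTop_atTop.comp ?_)
      exact (tendsto_add_atTop_nat 1).comp hφ.tendsto_atTop
    rw [mul_zero, add_zero] at hlim2
    refine le_of_tendsto_of_tendsto' hlim hlim2 (fun k => ?_)
    have hpos : (0:ℝ) < ((φ k + 1 : ℕ) : ℝ) := by positivity
    have := hsum (φ k + 1)
    calc _ ≤ (((φ k + 1 : ℕ) : ℝ))⁻¹ * (ε * ((φ k + 1 : ℕ) : ℝ) + D) := by gcongr
      _ = _ := by field_simp
  rw [integral_eq_zero_iff_of_nonneg hg0 (g.integrable ν)] at hint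
  have : ∀ᵐ y ∂ν, y ∈ Set.range ξ := by
    filter_upwards [hint] with y hy
    rw [hcl.mem_iff_infDist_zero hne]
    have hy' : g y = 0 := hy
    rw [hg] at hy'
    rcases min_choice 1 (Metric.infDist y (Set.range ξ)) with h | h
    · rw [h] at hy'; norm_num at hy'
    · rw [h] at hy'; exact hy'
  exact this
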